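/- For each k ∈ ℕ₀ with P(K = k) > 0, under the conditional probability P(· | K = k) the random elements Z_0, …, Z_k are independent; moreover, for 0 ≤ j ≤ k − 1 the conditional law of Z_j is L_j conditioned on E ∖ A (i.e. L_j(· ∩ (E∖A))/L_j(E∖A)), and the conditional law of Z_k is L_k conditioned on A (i.e. L_k(· ∩ A)/L_k(A)). -/

import Mathlib

open MeasureTheory ProbabilityTheory Filter Set

/-- The event `{K = k}` where `K := inf {n : Z n ∈ A}` is the first entry time of the
sequence `Z` into `A`: the `k`-th element lies in `A` and no earlier one does. -/
def firstEntryEvent {Ω E : Type*} (Z : ℕ → Ω → E) (A : Set E) (k : ℕ) : Set Ω :=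
  {ω | Z k ω ∈ A ∧ ∀ j, j < k → Z j ω ∉ A}

/-! The event `{K = k}` is the intersection of the preimages `Z i ⁻¹' B i` with `B i = Aᶜ` for
`i < k` and `B k = A`. Conditioning independent variables on such an intersection factors over the
indices, so it keeps them independent and conditions each law separately on its own `B i`. -/

section CondIInter

variable {Ω ι E F : Type*} [MeasurableSpace Ω] [MeasurableSpace E] [MeasurableSpace F]
  {μ : Measure Ω}

theorem map_cond_preimage {f : Ω → E} (hf : AEMeasurable f μ) {s : Set E} (hs : MeasurableSet s) :
    (μ[|f ⁻¹' s]).map f = (μ.map f)[|s] := by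
  rw [ProbabilityTheory.cond, ProbabilityTheory.cond, Measure.map_smul,
    Measure.restrict_map_of_aemeasurable hf hs, Measure.map_apply_of_aemeasurable hf hs]

theorem map_cond_iInter_preimage [Finite ι] {X : ι → Ω → E} {Y : ι → Ω → F} {t : ι → Set F}
    {i : ι} (hX : AEMeasurable (X i) μ) (hY : ∀ j, Measurable (Y j))
    (hindep : iIndepFun (fun j ω ↦ (X j ω, Y j ω)) μ) (ht : ∀ j, MeasurableSet (t j))
    (hpos : ∀ j ≠ i, μ (Y j ⁻¹' t j) ≠ 0) :
    (μ[|⋂ j, Y j ⁻¹' t j]).map (X i) = (μ[|Y i ⁻¹' t i]).map (X i) := by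
  ext u hu
  rw [Measure.map_apply_of_aemeasurable (hX.mono_ac cond_absolutelyContinuous) hu,
    Measure.map_apply_of_aemeasurable (hX.mono_ac cond_absolutelyContinuous) hu]
  have hfactor := cond_iInter (s := {i}) (f := fun j ↦ X j ⁻¹' u) hY hindep
    (fun _ _ ↦ ⟨u, hu, rfl⟩) (fun j hj ↦ hpos j (Finset.notMem_singleton.mp hj)) ht
  simpa only [Finset.mem_singleton, iInter_iInter_eq_left, Finset.prod_singleton] using hfactor

theorem iIndepFun_prodMk_self {X : ι → Ω → E} (hindep : iIndepFun X μ) :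
    iIndepFun (fun i ω ↦ (X i ω, X i ω)) μ :=
  hindep.comp (fun _ x ↦ (x, x)) fun _ ↦ measurable_id.prodMk measurable_id

theorem iIndepFun_cond_iInter_preimage [Finite ι] {X : ι → Ω → E} (hX : ∀ i, Measurable (X i))
    (hindep : iIndepFun X μ) {t : ι → Set E} (ht : ∀ i, MeasurableSet (t i))
    (hpos : ∀ i, μ (X i ⁻¹' t i) ≠ 0) :
    iIndepFun X (μ[|⋂ i, X i ⁻¹' t i]) :=
  (iIndepFun_prodMk_self hindep).cond hX hpos ht

theorem map_cond_iInter_preimage_self [Finite ι] {X : ι → Ω → E} (hX : ∀ i, Measurable (X i))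
    (hindep : iIndepFun X μ) {t : ι → Set E} (ht : ∀ i, MeasurableSet (t i)) {i : ι}
    (hpos : ∀ j ≠ i, μ (X j ⁻¹' t j) ≠ 0) :
    (μ[|⋂ j, X j ⁻¹' t j]).map (X i) = (μ.map (X i))[|t i] :=
  calc (μ[|⋂ j, X j ⁻¹' t j]).map (X i)
    _ = (μ[|X i ⁻¹' t i]).map (X i) :=
      map_cond_iInter_preimage (hX i).aemeasurable hX (iIndepFun_prodMk_self hindep) ht hpos
    _ = (μ.map (X i))[|t i] := map_cond_preimage (hX i).aemeasurable (ht i)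

end CondIInter

section FirstEntry

variable {Ω E : Type*}

/-- The sets `Aᶜ, …, Aᶜ, A` which `Z 0, …, Z k` must visit for the first entry time `K` of `Z`
into `A` to equal `k`; they present `{K = k}` as a finite intersection of preimages. -/
def firstEntryTarget (A : Set E) (k : ℕ) : Fin (k + 1) → Set E :=
  Fin.snoc (fun _ ↦ Aᶜ) A

@[simp]
theorem firstEntryTarget_castSucc (A : Set E) {k : ℕ} (j : Fin k) :
    firstEntryTarget A k j.castSucc = Aᶜ :=
  Fin.snoc_castSucc (α := fun _ ↦ Set E) ..

@[simp]
theorem firstEntryTarget_last (A : Set E) (k : ℕ) : firstEntryTarget A k (Fin.last k) = A :=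
  Fin.snoc_last (α := fun _ ↦ Set E) ..

theorem measurableSet_firstEntryTarget [MeasurableSpace E] {A : Set E} (hA : MeasurableSet A)
    {k : ℕ} (i : Fin (k + 1)) : MeasurableSet (firstEntryTarget A k i) := by
  cases i using Fin.lastCases with
  | last => simpa only [firstEntryTarget_last] using hA
  | cast j => simpa only [firstEntryTarget_castSucc] using hA.compl

theorem firstEntryEvent_eq_iInter_preimage (Z : ℕ → Ω → E) (A : Set E) (k : ℕ) :
    firstEntryEvent Z A k = ⋂ i : Fin (k + 1), Z i ⁻¹' firstEntryTarget A k i := by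
  ext ω
  simp [firstEntryEvent, Fin.forall_fin_succ', Fin.forall_iff, and_comm]

end FirstEntry

/-- for independent random elements `Z_0, Z_1, …` with laws `L_k`, conditionally
on `{K = k}` (where `K` is the first entry time into `A`, and provided `P(K = k) > 0`), the
elements `Z_0, …, Z_k` are independent, `Z_j` for `j < k` has conditional law `L_j` conditioned
on `Aᶜ`, and `Z_k` has conditional law `L_k` conditioned on `A`. -/
theorem stmt17 {Ω E : Type*} [MeasurableSpace Ω] [mE : MeasurableSpace E]
    (P : Measure Ω) [IsProbabilityMeasure P]
    (Z : ℕ → Ω → E) (hZ : ∀ k, Measurable (Z k))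
    (hindep : iIndepFun (m := fun _ : ℕ => mE) Z P)
    (A : Set E) (hA : MeasurableSet A) (k : ℕ)
    (hk : 0 < P (firstEntryEvent Z A k)) :
    iIndepFun (m := fun _ : Fin (k + 1) => mE) (fun j : Fin (k + 1) => Z j)
      (P[|firstEntryEvent Z A k]) ∧
    (∀ j : ℕ, j < k →
      (P[|firstEntryEvent Z A k]).map (Z j) = (P.map (Z j))[|Aᶜ]) ∧
    (P[|firstEntryEvent Z A k]).map (Z k) = (P.map (Z k))[|A] := by
  rw [firstEntryEvent_eq_iInter_preimage] at hk ⊢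
  have hZ_fin (i : Fin (k + 1)) : Measurable (Z i) := hZ i
  have hindep_fin : iIndepFun (fun i : Fin (k + 1) ↦ Z i) P := hindep.precomp Fin.val_injective
  have htarget := measurableSet_firstEntryTarget hA (k := k)
  have hpos (i : Fin (k + 1)) : P (Z i ⁻¹' firstEntryTarget A k i) ≠ 0 := fun hi ↦
    hk.ne' (measure_mono_null (iInter_subset _ i) hi)
  have hlaw (i : Fin (k + 1)) := map_cond_iInter_preimage_self hZ_fin hindep_fin htarget
    (i := i) fun j _ ↦ hpos j
  refine ⟨iIndepFun_cond_iInter_preimage hZ_fin hindep_fin htarget hpos, fun j hj ↦ ?_, ?_⟩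
  · simpa only [firstEntryTarget_castSucc, Fin.val_castSucc] using hlaw (Fin.castSucc ⟨j, hj⟩)
  · simpa only [firstEntryTarget_last, Fin.val_last] using hlaw (Fin.last k)
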